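/- arXiv:2303.00793 — 3 statements merged into one kernel-verified Lean document; each statement's English description precedes it below -/
import Mathlib

section
/- Fix a predicate p : α → β → Bool. Define join : List (α ⊕ β) → List (α × β) by a single left-to-right pass maintaining two accumulators W₁ : List α and W₂ : List β (both initially empty) and an output list (initially empty): upon Sum.inl a, append to the output the list (W₂.filter (fun b => p a b)).map (fun b => (a, b)) and then append a to W₁; upon Sum.inr b, append to the output the list (W₁.filter (fun a => p a b)).map (fun a => (a, b)) and then append b to W₂. Then for every list s : List (α ⊕ β), the multiset of pairs output by join s equals the multiset of all pairs (a, b) with a ranging over the left injections of s, b ranging over the right injections of s, and p a b = true: for every such pair, join s outputs (a, b) exactly (multiplicity of a among the left injections of s) · (multiplicity of b among the right injections of s) times, and join s outputs no pair with p a b = false. In particular the result is independent, as a multiset, of the interleaving order of left and right elements in s (correctness of the merged-window matching pass of Listing 2, the core of Theorem 2). -/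
/-- One step of the merged-window matching pass of Listing 2: the accumulator
carries the two windows `W₁ : List α`, `W₂ : List β` and the output list.
On a left element `a`, match it against all previously scanned right elements
and then store it; symmetrically for a right element `b`. -/
def joinStep {α β : Type*} (p : α → β → Bool) :
    List α × List β × List (α × β) → α ⊕ β → List α × List β × List (α × β)
  | (w1, w2, out), Sum.inl a =>
      (w1 ++ [a], w2, out ++ (w2.filter (fun b => p a b)).map (fun b => (a, b)))
  | (w1, w2, out), Sum.inr b =>
      (w1, w2 ++ [b], out ++ (w1.filter (fun a => p a b)).map (fun a => (a, b)))

/-- The merged-window join: a single left-to-right pass over the merged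
stream, starting from empty windows and empty output. -/
def join {α β : Type*} (p : α → β → Bool) (s : List (α ⊕ β)) : List (α × β) :=
  (s.foldl (joinStep p) ([], [], [])).2.2

/-!
The pairs emitted by a step are exactly the matching pairs gained by adding the scanned element to
its window. Hence "the output is the multiset of matching pairs of the two windows" is a loop
invariant. At the end of the pass the windows hold all left and all right elements of the stream.
-/

section Multiplicities

variable {α β : Type*}

-- `BEq (α × β)` compares componentwise and is not the instance derived from `DecidableEq (α × β)`,
-- so `Multiset.coe_count` does not apply to lists of pairs.
theorem coe_count_of_lawfulBEq [DecidableEq α] [BEq α] [LawfulBEq α] (a : α) (l : List α) :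
    (l : Multiset α).count a = l.count a := by
  rw [Multiset.coe_count, lawful_beq_subsingleton instBEqOfDecidableEq ‹BEq α›]

theorem count_product [DecidableEq α] [DecidableEq β] (M : Multiset α) (N : Multiset β)
    (a : α) (b : β) : (M ×ˢ N).count (a, b) = M.count a * N.count b := by
  induction M using Multiset.induction_on with
  | empty => simp
  | cons x M ih =>
    have count_row : (N.map (Prod.mk x)).count (a, b) = if a = x then N.count b else 0 := by
      split_ifs with h
      · rw [h, Multiset.count_map_eq_count' _ _ (Prod.mk_right_injective x)]
      · exact Multiset.count_eq_zero.mpr (by simp [Ne.symm h])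
    rw [Multiset.cons_product, Multiset.count_add, count_row, ih, Multiset.count_cons]
    split_ifs <;> ring

theorem count_filterMap_getLeft? [BEq α] [BEq β] (s : List (α ⊕ β)) (a : α) :
    (s.filterMap Sum.getLeft?).count a = s.count (Sum.inl a) := by
  rw [List.count_filterMap, List.count_eq_countP]
  congr with x
  cases x <;> rfl

theorem count_filterMap_getRight? [BEq α] [BEq β] (s : List (α ⊕ β)) (b : β) :
    (s.filterMap Sum.getRight?).count b = s.count (Sum.inr b) := by
  rw [List.count_filterMap, List.count_eq_countP]
  congr with x
  cases x <;> rfl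

end Multiplicities

section MatchingPairs

variable {α β : Type*} (p : α → β → Bool)

/-- The specification of a join: the pairs of `M ×ˢ N` satisfying the join predicate, with
multiplicity. -/
def matchingPairs (M : Multiset α) (N : Multiset β) : Multiset (α × β) :=
  (M ×ˢ N).filter fun x => p x.1 x.2

theorem matchingPairs_add_left (M₁ M₂ : Multiset α) (N : Multiset β) :
    matchingPairs p (M₁ + M₂) N = matchingPairs p M₁ N + matchingPairs p M₂ N := by
  simp only [matchingPairs, Multiset.add_product, Multiset.filter_add]

theorem matchingPairs_add_right (M : Multiset α) (N₁ N₂ : Multiset β) :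
    matchingPairs p M (N₁ + N₂) = matchingPairs p M N₁ + matchingPairs p M N₂ := by
  simp only [matchingPairs, Multiset.product_add, Multiset.filter_add]

theorem matchingPairs_singleton_left (a : α) (N : Multiset β) :
    matchingPairs p {a} N = (N.filter fun b => p a b).map fun b => (a, b) := by
  rw [matchingPairs, ← Multiset.cons_zero, Multiset.cons_product, Multiset.zero_product, add_zero,
    Multiset.filter_map]
  rfl

theorem matchingPairs_singleton_right (M : Multiset α) (b : β) :
    matchingPairs p M {b} = (M.filter fun a => p a b).map fun a => (a, b) := by
  rw [matchingPairs, ← Multiset.cons_zero, Multiset.product_cons, Multiset.product_zero, add_zero,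
    Multiset.filter_map]
  rfl

theorem count_matchingPairs [DecidableEq α] [DecidableEq β]
    (M : Multiset α) (N : Multiset β) (a : α) (b : β) :
    (matchingPairs p M N).count (a, b) = if p a b then M.count a * N.count b else 0 := by
  rw [matchingPairs, Multiset.count_filter, count_product]

end MatchingPairs

section Pass

variable {α β : Type*} (p : α → β → Bool)

theorem fst_foldl_joinStep (s : List (α ⊕ β)) (st : List α × List β × List (α × β)) :
    (s.foldl (joinStep p) st).1 = st.1 ++ s.filterMap Sum.getLeft? := by
  induction s generalizing st with
  | nil => simp
  | cons x s ih => cases x <;> simp [ih, joinStep, List.filterMap_cons]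

theorem fst_snd_foldl_joinStep (s : List (α ⊕ β)) (st : List α × List β × List (α × β)) :
    (s.foldl (joinStep p) st).2.1 = st.2.1 ++ s.filterMap Sum.getRight? := by
  induction s generalizing st with
  | nil => simp
  | cons x s ih => cases x <;> simp [ih, joinStep, List.filterMap_cons]

/-- The loop invariant of the pass: the output of the state `(W₁, W₂, out)` is, as a multiset, the
join of its windows `W₁` and `W₂`. -/
def JoinInvariant (st : List α × List β × List (α × β)) : Prop :=
  (st.2.2 : Multiset (α × β)) = matchingPairs p st.1 st.2.1

variable {p}

theorem JoinInvariant.step {st : List α × List β × List (α × β)} (h : JoinInvariant p st)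
    (x : α ⊕ β) : JoinInvariant p (joinStep p st x) := by
  obtain ⟨w₁, w₂, out⟩ := st
  have h_out : (out : Multiset (α × β)) = matchingPairs p w₁ w₂ := h
  cases x with
  | inl a =>
    have h_new : matchingPairs p {a} w₂ = ↑((w₂.filter fun b => p a b).map fun b => (a, b)) := by
      simp [matchingPairs_singleton_left]
    rw [JoinInvariant, joinStep, ← Multiset.coe_add, ← Multiset.coe_add, Multiset.coe_singleton,
      matchingPairs_add_left, h_out, h_new]
  | inr b =>
    have h_new : matchingPairs p w₁ {b} = ↑((w₁.filter fun a => p a b).map fun a => (a, b)) := by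
      simp [matchingPairs_singleton_right]
    rw [JoinInvariant, joinStep, ← Multiset.coe_add, ← Multiset.coe_add, Multiset.coe_singleton,
      matchingPairs_add_right, h_out, h_new]

theorem JoinInvariant.foldl {st : List α × List β × List (α × β)}
    (h : JoinInvariant p st) (s : List (α ⊕ β)) : JoinInvariant p (s.foldl (joinStep p) st) :=
  List.foldlRecOn s _ h fun _ h x _ => h.step x

variable (p)

theorem coe_join (s : List (α ⊕ β)) :
    (join p s : Multiset (α × β)) =
      matchingPairs p (s.filterMap Sum.getLeft?) (s.filterMap Sum.getRight?) := by
  have h_init : JoinInvariant p ([], [], []) := by simp [JoinInvariant, matchingPairs]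
  have h_final := h_init.foldl s
  rwa [JoinInvariant, fst_foldl_joinStep, fst_snd_foldl_joinStep] at h_final

end Pass

/-- Correctness of the merged-window matching pass (core of Theorem 2): as a
multiset, the output of `join p s` consists of exactly the pairs `(a, b)` with
`a` a left injection of `s`, `b` a right injection of `s`, and `p a b = true`;
each such pair appears with multiplicity
(count of `a` among left injections) · (count of `b` among right injections),
and no pair with `p a b = false` is output.  In particular the result is
independent, as a multiset, of the interleaving order of `s`. -/
theorem join_count {α β : Type*} [DecidableEq α] [DecidableEq β]
    (p : α → β → Bool) (s : List (α ⊕ β)) (a : α) (b : β) :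
    (join p s).count (a, b)
      = if p a b then s.count (Sum.inl a) * s.count (Sum.inr b) else 0 := by
  rw [← coe_count_of_lawfulBEq, coe_join, count_matchingPairs, Multiset.coe_count,
    Multiset.coe_count, count_filterMap_getLeft?, count_filterMap_getRight?]
end

section
/- Let τ : ℕ and T : List β. The Unfold loop processes the embedded tuple (τ, T, −1) by producing index-carrying tuples (τ, T, j) for j = 0, 1, …, incrementing the index by one per loop iteration as long as the index is smaller than T.length, while the downstream emitting operator outputs (τ, T.get j) for each received index j < T.length. Then the loop performs exactly T.length emitting iterations before terminating, and the resulting output list (List.range T.length).map (fun j => (τ, T.get j)) equals T.map (fun b => (τ, b)): every element embedded in (τ, T, −1) is emitted exactly once, each with timestamp τ (deterministic functional core of Theorem 3). -/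
/-- The emitting loop of the Unfold operator (Theorem 3, Listing 4): starting
from index `j`, as long as the carried index is smaller than `T.length`, the
downstream operator emits `(τ, T.get j)` and the loop increments the index. -/
def unfoldLoop {β : Type*} (τ : ℕ) (T : List β) : ℕ → List (ℕ × β)
  | j =>
    if h : j < T.length then (τ, T.get ⟨j, h⟩) :: unfoldLoop τ T (j + 1)
    else []
termination_by j => T.length - j
decreasing_by omega

section

variable {β : Type*} (τ : ℕ) (T : List β) {j : ℕ}

theorem unfoldLoop_of_lt (h : j < T.length) :
    unfoldLoop τ T j = (τ, T[j]) :: unfoldLoop τ T (j + 1) := by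
  rw [unfoldLoop, dif_pos h, List.get_eq_getElem]

theorem unfoldLoop_of_length_le (h : T.length ≤ j) : unfoldLoop τ T j = [] := by
  rw [unfoldLoop, dif_neg h.not_gt]

variable (j)

theorem unfoldLoop_eq_map_drop : unfoldLoop τ T j = (T.drop j).map (fun b => (τ, b)) := by
  induction j using unfoldLoop.induct T with
  | case1 j _ h ih => rw [unfoldLoop_of_lt τ T h, ih, List.drop_eq_getElem_cons h, List.map_cons]
  | case2 j _ h =>
    have hle : T.length ≤ j := Nat.le_of_not_lt h
    rw [unfoldLoop_of_length_le τ T hle, List.drop_eq_nil_of_le hle, List.map_nil]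

theorem length_unfoldLoop : (unfoldLoop τ T j).length = T.length - j := by
  rw [unfoldLoop_eq_map_drop, List.length_map, List.length_drop]

end

/-- Deterministic functional core of Theorem 3: processing the embedded tuple
`(τ, T, -1)` the loop performs exactly `T.length` emitting iterations before
terminating, and the resulting output list equals `T.map (fun b => (τ, b))`:
every element embedded in `(τ, T, -1)` is emitted exactly once, each with
timestamp `τ`. -/
theorem unfoldLoop_eq_map {β : Type*} (τ : ℕ) (T : List β) :
    unfoldLoop τ T 0 = T.map (fun b => (τ, b)) ∧
    (unfoldLoop τ T 0).length = T.length := by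
  constructor
  · rw [unfoldLoop_eq_map_drop, List.drop_zero]
  · rw [length_unfoldLoop, Nat.sub_zero]
end

section
/- Let P and δ be natural numbers with δ > 0 and δ ∣ P, and let T : ℕ → Multiset α assign to each timestamp τ the multiset of input tuples with timestamp τ, with T τ = 0 whenever δ ∤ τ and T τ ≠ 0 for only finitely many τ. Define the state multiset s : ℕ → Multiset α recursively by s ℓ = (s (ℓ−1) for ℓ ≥ 1, and 0 for ℓ = 0) + Σ over all τ processed in window instance ℓ (i.e., ℓ·P ≤ τ < ℓ·P + P + δ and τ ≠ ℓ·P + P) of T τ. Then for every ℓ : ℕ, s ℓ = Σ_{τ < (ℓ+1)·P} T τ: the state produced for window instance ℓ contains every input tuple with timestamp less than (ℓ+1)·P exactly once, so each input tuple is incorporated into the evolving state exactly once and the state spans the entire (event-time-unbounded) history of the stream (core of Lemma 6: a looping Aggregate with sliding window of advance P and size P + δ maintains an unbounded state correctly). -/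
/-!
Window instance `ℓ` processes the block `[ℓ * P, (ℓ + 1) * P)` and, beyond its own end, the gap
`((ℓ + 1) * P, (ℓ + 1) * P + δ)`. Since `δ ∣ P`, the gap lies strictly between two consecutive
multiples of `δ` and so carries no tuples, whereas the excluded timestamp `(ℓ + 1) * P` is left to
the next instance. Hence each instance absorbs exactly the tuples of its block, and the blocks of
the instances `0, …, ℓ` tile `[0, (ℓ + 1) * P)`.
-/

/-- The set of timestamps *processed* in instance `ℓ` of the sliding window
with advance `P` and size `P + δ`: those `τ` with `ℓ·P ≤ τ < ℓ·P + P + δ`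
and `τ ≠ ℓ·P + P`. -/
def procSet (P δ ℓ : ℕ) : Finset ℕ :=
  (Finset.Ico (ℓ * P) (ℓ * P + P + δ)).filter (fun τ => τ ≠ ℓ * P + P)

/-- The evolving state (as a multiset of absorbed input tuples) of the looping
Aggregate of Lemma 6: the state of instance `ℓ` is the state poured from
instance `ℓ - 1` (empty for `ℓ = 0`) plus all input tuples processed in
instance `ℓ`. -/
def stateMul {α : Type*} (P δ : ℕ) (T : ℕ → Multiset α) : ℕ → Multiset α
  | 0 => ∑ τ ∈ procSet P δ 0, T τ
  | ℓ + 1 => stateMul P δ T ℓ + ∑ τ ∈ procSet P δ (ℓ + 1), T τ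

theorem sum_range_sum_Ico {M : Type*} [AddCommMonoid M] (f : ℕ → M) {a : ℕ → ℕ}
    (ha : Monotone a) (n : ℕ) :
    ∑ i ∈ Finset.range n, ∑ τ ∈ Finset.Ico (a i) (a (i + 1)), f τ =
      ∑ τ ∈ Finset.Ico (a 0) (a n), f τ := by
  induction n with
  | zero => simp
  | succ n ih =>
    rw [Finset.sum_range_succ, ih,
      Finset.sum_Ico_consecutive f (ha n.zero_le) (ha n.le_succ)]

theorem not_dvd_of_mem_Ioo_add {δ a τ : ℕ} (ha : δ ∣ a) (hτ : τ ∈ Finset.Ioo a (a + δ)) :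
    ¬ δ ∣ τ := by
  obtain ⟨k, rfl⟩ := ha
  obtain ⟨hlt, hgt⟩ := Finset.mem_Ioo.mp hτ
  exact Nat.not_dvd_of_lt_of_lt_mul_succ hlt hgt

theorem procSet_eq_Ico_union_Ioo (P δ ℓ : ℕ) :
    procSet P δ ℓ =
      Finset.Ico (ℓ * P) ((ℓ + 1) * P) ∪ Finset.Ioo ((ℓ + 1) * P) ((ℓ + 1) * P + δ) := by
  ext τ
  simp only [procSet, Nat.succ_mul, Finset.mem_filter, Finset.mem_union, Finset.mem_Ico,
    Finset.mem_Ioo]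
  omega

theorem sum_procSet_eq_sum_Ico {M : Type*} [AddCommMonoid M] {P δ : ℕ} (hP : δ ∣ P)
    {f : ℕ → M} (hf : ∀ τ, ¬ δ ∣ τ → f τ = 0) (ℓ : ℕ) :
    ∑ τ ∈ procSet P δ ℓ, f τ = ∑ τ ∈ Finset.Ico (ℓ * P) ((ℓ + 1) * P), f τ := by
  have gap_eq_zero : ∑ τ ∈ Finset.Ioo ((ℓ + 1) * P) ((ℓ + 1) * P + δ), f τ = 0 :=
    Finset.sum_eq_zero fun τ hτ => hf τ (not_dvd_of_mem_Ioo_add (hP.mul_left (ℓ + 1)) hτ)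
  have disjoint_gap : Disjoint (Finset.Ico (ℓ * P) ((ℓ + 1) * P))
      (Finset.Ioo ((ℓ + 1) * P) ((ℓ + 1) * P + δ)) :=
    Finset.disjoint_left.mpr fun _ hblock hgap =>
      (Finset.mem_Ico.mp hblock).2.not_gt (Finset.mem_Ioo.mp hgap).1
  rw [procSet_eq_Ico_union_Ioo, Finset.sum_union disjoint_gap, gap_eq_zero, add_zero]

theorem stateMul_eq_sum_sum_procSet {α : Type*} (P δ : ℕ) (T : ℕ → Multiset α) (ℓ : ℕ) :
    stateMul P δ T ℓ = ∑ i ∈ Finset.range (ℓ + 1), ∑ τ ∈ procSet P δ i, T τ := by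
  induction ℓ with
  | zero => rw [stateMul, Finset.sum_range_one]
  | succ ℓ ih => rw [stateMul, ih, Finset.sum_range_succ _ (ℓ + 1)]

theorem stateMul_eq_history_general {α : Type*} {P δ : ℕ} (hP : δ ∣ P)
    {T : ℕ → Multiset α} (hT0 : ∀ τ, ¬ δ ∣ τ → T τ = 0) (ℓ : ℕ) :
    stateMul P δ T ℓ = ∑ τ ∈ Finset.range ((ℓ + 1) * P), T τ := by
  have starts_monotone : Monotone fun i : ℕ => i * P :=
    fun _ _ h => Nat.mul_le_mul_right P h
  calc stateMul P δ T ℓ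
      = ∑ i ∈ Finset.range (ℓ + 1), ∑ τ ∈ procSet P δ i, T τ :=
        stateMul_eq_sum_sum_procSet P δ T ℓ
    _ = ∑ i ∈ Finset.range (ℓ + 1), ∑ τ ∈ Finset.Ico (i * P) ((i + 1) * P), T τ :=
        Finset.sum_congr rfl fun i _ => sum_procSet_eq_sum_Ico hP hT0 i
    _ = ∑ τ ∈ Finset.Ico (0 * P) ((ℓ + 1) * P), T τ :=
        sum_range_sum_Ico T starts_monotone (ℓ + 1)
    _ = ∑ τ ∈ Finset.range ((ℓ + 1) * P), T τ := by
        rw [Nat.zero_mul, Finset.range_eq_Ico]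

/-- Core of Lemma 6: a looping Aggregate with sliding window of advance `P`
and size `P + δ` maintains an unbounded state correctly: the state produced
for window instance `ℓ` contains every input tuple with timestamp less than
`(ℓ+1)·P` exactly once. -/
theorem stateMul_eq_history {α : Type*} (P δ : ℕ) (hδ : 0 < δ) (hP : δ ∣ P)
    (T : ℕ → Multiset α) (hT0 : ∀ τ, ¬ δ ∣ τ → T τ = 0)
    (hfin : {τ | T τ ≠ 0}.Finite) :
    ∀ ℓ : ℕ, stateMul P δ T ℓ = ∑ τ ∈ Finset.range ((ℓ + 1) * P), T τ :=
  stateMul_eq_history_general hP hT0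
end
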